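/- Let ω = Σ_{i=1}^l m_i α_i be a minuscule weight whose coefficients m_i are nonnegative rationals, I = {α ∈ S : ⟨ω, α∨⟩ = 0} and W^I = {w ∈ W : w(α) > 0 for all α ∈ I}. Then there exists a unique τ ∈ W^I such that τ(ω) = Σ_{i=1}^l (m_i − ⌊m_i⌋) α_i, where ⌊x⌋ denotes the floor (integer part) of x. -/

import Mathlib

open scoped RealInnerProductSpace

/-- A finite reduced crystallographic root system `Φ` spanning a real inner product
space `V`, together with a fixed base of simple roots `α 0, …, α (l-1)`: every root is
a nonnegative or nonpositive integral combination of the simple roots.  The simple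
reflections `s i` are given by the usual formula `s_α(λ) = λ − ⟨λ, α∨⟩ α`. -/
structure RootSystemWithBase (V : Type*) [NormedAddCommGroup V] [InnerProductSpace ℝ V] where
  l : ℕ
  Φ : Finset V
  α : Fin l → V
  s : Fin l → V ≃ₗ[ℝ] V
  α_mem : ∀ i, α i ∈ Φ
  root_ne_zero : ∀ β ∈ Φ, β ≠ (0 : V)
  root_span : Submodule.span ℝ (Φ : Set V) = ⊤
  simple_indep : LinearIndependent ℝ α
  crystallographic : ∀ β ∈ Φ, ∀ γ ∈ Φ, ∃ z : ℤ, 2 * ⟪β, γ⟫ / ⟪γ, γ⟫ = (z : ℝ)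
  reduced : ∀ β ∈ Φ, ∀ c : ℝ, c • β ∈ Φ → c = 1 ∨ c = -1
  base : ∀ β ∈ Φ,
    (∃ c : Fin l → ℤ, (∀ i, 0 ≤ c i) ∧ β = ∑ i, (c i : ℝ) • α i) ∨
    (∃ c : Fin l → ℤ, (∀ i, 0 ≤ c i) ∧ β = -(∑ i, (c i : ℝ) • α i))
  s_apply : ∀ i v, s i v = v - (2 * ⟪v, α i⟫ / ⟪α i, α i⟫) • α i
  s_root : ∀ β ∈ Φ, ∀ i, s i β ∈ Φ

namespace RootSystemWithBase

variable {V : Type*} [NormedAddCommGroup V] [InnerProductSpace ℝ V]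

/-- The pairing `⟨λ, β∨⟩ = 2(λ,β)/(β,β)`. -/
noncomputable def pairing (_D : RootSystemWithBase V) (lam β : V) : ℝ :=
  2 * ⟪lam, β⟫ / ⟪β, β⟫

/-- The Weyl group: the subgroup of `GL(V)` generated by the simple reflections. -/
def W (D : RootSystemWithBase V) : Subgroup (V ≃ₗ[ℝ] V) := Subgroup.closure (Set.range D.s)

/-- The product `s_{i₁} · s_{i₂} ⋯ s_{i_k}` of simple reflections along a word. -/
def wordProd (D : RootSystemWithBase V) (L : List (Fin D.l)) : V ≃ₗ[ℝ] V := (L.map D.s).prod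

/-- The length `ℓ(w)`: the least `k` such that `w` is a product of `k` simple
reflections. -/
noncomputable def len (D : RootSystemWithBase V) (w : V ≃ₗ[ℝ] V) : ℕ :=
  sInf {k | ∃ L : List (Fin D.l), L.length = k ∧ D.wordProd L = w}

/-- `v` is a linear combination of the simple roots with all coefficients `≥ 0`. -/
def IsNonnegComb (D : RootSystemWithBase V) (v : V) : Prop :=
  ∃ c : Fin D.l → ℝ, (∀ i, 0 ≤ c i) ∧ v = ∑ i, c i • D.α i

/-- `v > 0`: a nonzero nonnegative combination of the simple roots. -/
def IsPos (D : RootSystemWithBase V) (v : V) : Prop := D.IsNonnegComb v ∧ v ≠ 0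

/-- `x ≤ y` for vectors: `y − x` is a nonnegative combination of the simple roots. -/
def vle (D : RootSystemWithBase V) (x y : V) : Prop := D.IsNonnegComb (y - x)

/-- `λ` is dominant: `⟨λ, αᵢ∨⟩ ≥ 0` for all `i`. -/
def IsDominant (D : RootSystemWithBase V) (lam : V) : Prop :=
  ∀ i, 0 ≤ D.pairing lam (D.α i)

/-- `ω` is minuscule: dominant with `⟨ω, β∨⟩ ∈ {−1, 0, 1}` for every root `β`. -/
def IsMinuscule (D : RootSystemWithBase V) (ω : V) : Prop :=
  D.IsDominant ω ∧ ∀ β ∈ D.Φ, D.pairing ω β = -1 ∨ D.pairing ω β = 0 ∨ D.pairing ω β = 1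

/-- `W^I = {w ∈ W : w(α) > 0 for all α ∈ I}` where `I = {α ∈ S : ⟨ω, α∨⟩ = 0}`. -/
def WI (D : RootSystemWithBase V) (ω : V) : Set (V ≃ₗ[ℝ] V) :=
  {w | w ∈ D.W ∧ ∀ i, D.pairing ω (D.α i) = 0 → D.IsPos (w (D.α i))}

/-- `w ≤ τ` in `W`:  `ℓ(τ) = ℓ(w) + ℓ(τ w⁻¹)`. -/
def wle (D : RootSystemWithBase V) (w τ : V ≃ₗ[ℝ] V) : Prop :=
  D.len τ = D.len w + D.len (τ * w⁻¹)

end RootSystemWithBase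

/-!
Let `Q` be the root lattice.  A minuscule `ω` has minimal norm in `ω + Q`: a simple reflection
moves any conjugate of `ω` by at most one simple root, so one can walk towards a given point of
the coset until the displacement pairs nonnegatively with the conjugate reached.  Since
nonnegative combinations of simple roots with disjoint supports have nonpositive inner product,
minimality of the norm turns an element `y` of `W ω` of least height among those with nonnegative
coefficients into the coefficientwise least one.  On the other hand, for each `i` some nonnegative
element of `W ω` has `i`-th coefficient less than `1`: lower `ω` without letting the `i`-th
coefficient become negative, then raise it again at the negative coefficients.  Hence all
coefficients of `y` lie in `[0, 1)`, that is, they are the fractional parts of those of `ω`.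
Finally, `W^I` is a system of representatives for the cosets of the stabilizer of `ω`, by the
exchange condition.
-/

namespace RootSystemWithBase

variable {V : Type*} [NormedAddCommGroup V] [InnerProductSpace ℝ V] {D : RootSystemWithBase V}
  {i j : Fin D.l} {v w x y z β ω : V} {u : V ≃ₗ[ℝ] V}

section Coordinates

theorem top_le_span_range_α (D : RootSystemWithBase V) :
    ⊤ ≤ Submodule.span ℝ (Set.range D.α) := by
  have sum_mem (c : Fin D.l → ℤ) :
      ∑ i, (c i : ℝ) • D.α i ∈ Submodule.span ℝ (Set.range D.α) :=
    Submodule.sum_mem _ fun i _ ↦ Submodule.smul_mem _ _ (Submodule.subset_span ⟨i, rfl⟩)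
  rw [← D.root_span, Submodule.span_le]
  intro β hβ
  rcases D.base β hβ with ⟨c, -, rfl⟩ | ⟨c, -, rfl⟩
  · exact sum_mem c
  · exact Submodule.neg_mem _ (sum_mem c)

/-- The simple roots as a basis of `V`. -/
noncomputable def simpleBasis (D : RootSystemWithBase V) : Module.Basis (Fin D.l) ℝ V :=
  Module.Basis.mk D.simple_indep D.top_le_span_range_α

@[simp]
theorem coe_simpleBasis (D : RootSystemWithBase V) : ⇑D.simpleBasis = D.α :=
  Module.Basis.coe_mk _ _

/-- The coefficient of `α i` in the expansion of a vector in simple roots. -/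
noncomputable def coord (D : RootSystemWithBase V) (i : Fin D.l) : V →ₗ[ℝ] ℝ :=
  D.simpleBasis.coord i

theorem sum_coord_smul (D : RootSystemWithBase V) (v : V) : ∑ i, D.coord i v • D.α i = v := by
  simpa [coord] using D.simpleBasis.sum_repr v

theorem coord_sum_smul (c : Fin D.l → ℝ) (j : Fin D.l) :
    D.coord j (∑ i, c i • D.α i) = c j := by
  simpa [coord] using congrFun (D.simpleBasis.repr_sum_self c) j

theorem coord_α (i j : Fin D.l) : D.coord j (D.α i) = if i = j then 1 else 0 := by
  rw [← coe_simpleBasis, coord, Module.Basis.coord_apply, Module.Basis.repr_self,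
    Finsupp.single_apply]

theorem ext_coord (h : ∀ i, D.coord i v = D.coord i w) : v = w :=
  D.simpleBasis.ext_elem h

theorem inner_eq_sum_coord_mul (D : RootSystemWithBase V) (x y : V) :
    ⟪x, y⟫ = ∑ i, D.coord i y * ⟪x, D.α i⟫ := by
  conv_lhs => rw [← D.sum_coord_smul y]
  simp only [inner_sum, real_inner_smul_right]

/-- The height of a vector: the sum of its coefficients in simple roots. -/
noncomputable def height (D : RootSystemWithBase V) : V →ₗ[ℝ] ℝ := ∑ i, D.coord i

@[simp]
theorem height_α (i : Fin D.l) : D.height (D.α i) = 1 := by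
  simp [height, coord_α]

theorem isNonnegComb_iff : D.IsNonnegComb v ↔ ∀ i, 0 ≤ D.coord i v := by
  constructor
  · rintro ⟨c, hc, rfl⟩ i
    rw [coord_sum_smul]
    exact hc i
  · exact fun h ↦ ⟨fun i ↦ D.coord i v, h, (D.sum_coord_smul v).symm⟩

theorem vle_iff : D.vle x y ↔ ∀ i, D.coord i x ≤ D.coord i y := by
  simp only [vle, isNonnegComb_iff, map_sub, sub_nonneg]

theorem IsPos.not_isNonnegComb_neg (hv : D.IsPos v) : ¬ D.IsNonnegComb (-v) := by
  intro hneg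
  refine hv.2 (D.ext_coord fun i ↦ ?_)
  have h₁ := isNonnegComb_iff.1 hv.1 i
  have h₂ := isNonnegComb_iff.1 hneg i
  rw [map_neg] at h₂
  rw [map_zero]
  linarith

theorem isPos_or_isPos_neg (hβ : β ∈ D.Φ) : D.IsPos β ∨ D.IsPos (-β) := by
  have hne := D.root_ne_zero β hβ
  rcases D.base β hβ with ⟨c, hc, h⟩ | ⟨c, hc, h⟩
  · exact .inl ⟨⟨fun i ↦ c i, fun i ↦ Int.cast_nonneg (hc i), h⟩, hne⟩
  · exact .inr ⟨⟨fun i ↦ c i, fun i ↦ Int.cast_nonneg (hc i), by rw [h, neg_neg]⟩,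
      neg_ne_zero.2 hne⟩

theorem isPos_α (i : Fin D.l) : D.IsPos (D.α i) := by
  refine ⟨isNonnegComb_iff.2 fun j ↦ ?_, D.root_ne_zero _ (D.α_mem i)⟩
  rw [coord_α]
  positivity

end Coordinates

section Reflections

theorem inner_self_α_pos (i : Fin D.l) : 0 < ⟪D.α i, D.α i⟫ :=
  real_inner_self_pos.2 (D.root_ne_zero _ (D.α_mem i))

theorem inner_α_eq (x : V) (i : Fin D.l) :
    ⟪x, D.α i⟫ = D.pairing x (D.α i) * (⟪D.α i, D.α i⟫ / 2) := by
  have hne := (inner_self_α_pos i).ne'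
  rw [pairing]
  field_simp

theorem pairing_nonneg_iff : 0 ≤ D.pairing x (D.α i) ↔ 0 ≤ ⟪x, D.α i⟫ := by
  rw [inner_α_eq, mul_nonneg_iff_of_pos_right (half_pos (inner_self_α_pos i))]

theorem pairing_neg_left (D : RootSystemWithBase V) (x β : V) :
    D.pairing (-x) β = -D.pairing x β := by
  simp only [pairing, inner_neg_left, mul_neg, neg_div]

theorem pairing_nonpos_iff : D.pairing x (D.α i) ≤ 0 ↔ ⟪x, D.α i⟫ ≤ 0 := by
  rw [← neg_nonneg, ← pairing_neg_left, pairing_nonneg_iff, inner_neg_left, neg_nonneg]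

theorem s_apply_eq (i : Fin D.l) (x : V) : D.s i x = x - D.pairing x (D.α i) • D.α i :=
  D.s_apply i x

theorem s_apply_eq_reflection (i : Fin D.l) (x : V) :
    D.s i x = (ℝ ∙ D.α i)ᗮ.reflection x := by
  rw [s_apply, Submodule.reflection_orthogonal_apply, Submodule.reflection_singleton_apply,
    neg_sub, real_inner_comm, real_inner_self_eq_norm_sq, two_smul, ← add_smul, ← two_mul,
    mul_div_assoc]
  rfl

theorem s_α (i : Fin D.l) : D.s i (D.α i) = -D.α i := by
  rw [s_apply_eq_reflection, Submodule.reflection_orthogonalComplement_singleton_eq_neg]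

@[simp]
theorem s_mul_s (i : Fin D.l) : D.s i * D.s i = 1 := by
  ext x
  simp only [LinearEquiv.mul_apply, s_apply_eq_reflection, Submodule.reflection_reflection]
  rfl

@[simp]
theorem s_inv (i : Fin D.l) : (D.s i)⁻¹ = D.s i :=
  inv_eq_of_mul_eq_one_left (s_mul_s i)

theorem coord_s_apply_of_ne (hij : i ≠ j) (x : V) : D.coord j (D.s i x) = D.coord j x := by
  simp [s_apply_eq, coord_α, hij]

theorem pairing_α_nonpos (hij : i ≠ j) : D.pairing (D.α i) (D.α j) ≤ 0 := by
  have hcoord_i : D.coord i (D.s j (D.α i)) = 1 := by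
    rw [coord_s_apply_of_ne hij.symm, coord_α, if_pos rfl]
  have hcoord_j : D.coord j (D.s j (D.α i)) = -D.pairing (D.α i) (D.α j) := by
    simp [s_apply_eq, coord_α, hij]
  rcases isPos_or_isPos_neg (D.s_root _ (D.α_mem i) j) with h | h
  · have := isNonnegComb_iff.1 h.1 j
    linarith
  · have := isNonnegComb_iff.1 h.1 i
    rw [map_neg] at this
    linarith

theorem eq_α_of_isNonnegComb_neg_s (hβ : β ∈ D.Φ) (hpos : D.IsNonnegComb β)
    (hneg : D.IsNonnegComb (-D.s j β)) : β = D.α j := by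
  rw [isNonnegComb_iff] at hpos hneg
  have hβ_eq : β = D.coord j β • D.α j := D.ext_coord fun i ↦ by
    rw [map_smul, coord_α, smul_eq_mul]
    by_cases hji : j = i
    · simp [hji]
    · have := hneg i
      rw [map_neg, coord_s_apply_of_ne hji] at this
      rw [if_neg hji, mul_zero]
      linarith [hpos i]
  rcases D.reduced _ (D.α_mem j) _ (hβ_eq ▸ hβ) with h | h
  · rwa [h, one_smul] at hβ_eq
  · linarith [hpos j]

end Reflections

section WeylGroup

theorem s_mem_W (i : Fin D.l) : D.s i ∈ D.W :=
  Subgroup.subset_closure ⟨i, rfl⟩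

@[elab_as_elim]
theorem W_induction {p : (u : V ≃ₗ[ℝ] V) → u ∈ D.W → Prop} (one : p 1 D.W.one_mem)
    (s_mul : ∀ i u (hu : u ∈ D.W), p u hu → p (D.s i * u) (D.W.mul_mem (s_mem_W i) hu))
    (hu : u ∈ D.W) : p u hu := by
  induction hu using Subgroup.closure_induction_left with
  | one => exact one
  | mul_left t ht u hu ih =>
    obtain ⟨i, rfl⟩ := ht
    exact s_mul i u hu ih
  | inv_mul_cancel t ht u hu ih =>
    obtain ⟨i, rfl⟩ := ht
    simpa only [s_inv] using s_mul i u hu ih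

theorem apply_mem_Φ (hu : u ∈ D.W) (hβ : β ∈ D.Φ) : u β ∈ D.Φ := by
  induction hu using W_induction with
  | one => exact hβ
  | s_mul i u _ ih => exact D.s_root _ ih i

theorem norm_apply (hu : u ∈ D.W) (x : V) : ‖u x‖ = ‖x‖ := by
  induction hu using W_induction with
  | one => rfl
  | s_mul i u _ ih =>
    rw [LinearEquiv.mul_apply, s_apply_eq_reflection, LinearIsometryEquiv.norm_map, ih]

theorem inner_apply_apply (hu : u ∈ D.W) (x y : V) : ⟪u x, u y⟫ = ⟪x, y⟫ :=
  (LinearMap.norm_map_iff_inner_map_map u.toLinearMap).1 (norm_apply hu) x y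

theorem pairing_apply_apply (hu : u ∈ D.W) (x β : V) :
    D.pairing (u x) (u β) = D.pairing x β := by
  simp only [pairing, inner_apply_apply hu]

end WeylGroup

section Length

variable {L : List (Fin D.l)}

theorem wordProd_cons (i : Fin D.l) (L : List (Fin D.l)) :
    D.wordProd (i :: L) = D.s i * D.wordProd L := by
  simp only [wordProd, List.map_cons, List.prod_cons]

theorem wordProd_concat (L : List (Fin D.l)) (i : Fin D.l) :
    D.wordProd (L ++ [i]) = D.wordProd L * D.s i := by
  simp [wordProd]

theorem wordProd_mem_W (L : List (Fin D.l)) : D.wordProd L ∈ D.W :=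
  Subgroup.list_prod_mem _ (by simpa using fun i _ ↦ s_mem_W i)

theorem exists_wordProd_eq (hu : u ∈ D.W) : ∃ L, D.wordProd L = u := by
  induction hu using W_induction with
  | one => exact ⟨[], rfl⟩
  | s_mul i u _ ih =>
    obtain ⟨L, rfl⟩ := ih
    exact ⟨i :: L, wordProd_cons i L⟩

theorem len_wordProd_le (L : List (Fin D.l)) : D.len (D.wordProd L) ≤ L.length :=
  Nat.sInf_le ⟨L, rfl, rfl⟩

theorem exists_reduced_word (hu : u ∈ D.W) : ∃ L, L.length = D.len u ∧ D.wordProd L = u := by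
  obtain ⟨L, hL⟩ := exists_wordProd_eq hu
  exact Nat.sInf_mem (s := {k | ∃ L : List (Fin D.l), L.length = k ∧ D.wordProd L = u})
    ⟨L.length, L, rfl, hL⟩

theorem s_mul_eq_mul_s (hu : u ∈ D.W) (h : u (D.α i) = D.α j) : D.s j * u = u * D.s i := by
  ext x
  rw [LinearEquiv.mul_apply, LinearEquiv.mul_apply, s_apply_eq, s_apply_eq, ← h,
    pairing_apply_apply hu, map_sub, map_smul]

-- At the first letter `j` (from the right) that makes the image of `α i` negative, this image is
-- `α j`, and commuting `s j` past the letters to its right cancels it against `s i`.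
theorem exchange_condition (h : D.IsNonnegComb (-D.wordProd L (D.α i))) :
    ∃ L', D.wordProd L' = D.wordProd L * D.s i ∧ L'.length < L.length := by
  induction L with
  | nil => exact absurd h (isPos_α i).not_isNonnegComb_neg
  | cons j L ih =>
    have hroot : D.wordProd L (D.α i) ∈ D.Φ := apply_mem_Φ (wordProd_mem_W L) (D.α_mem i)
    rcases isPos_or_isPos_neg hroot with hpos | hneg
    · rw [wordProd_cons] at h
      have hj := eq_α_of_isNonnegComb_neg_s hroot hpos.1 h
      refine ⟨L, ?_, Nat.lt_succ_self _⟩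
      rw [wordProd_cons, s_mul_eq_mul_s (wordProd_mem_W L) hj, mul_assoc, s_mul_s, mul_one]
    · obtain ⟨L', hprod, hlen⟩ := ih hneg.1
      exact ⟨j :: L', by rw [wordProd_cons, wordProd_cons, hprod, mul_assoc],
        Nat.succ_lt_succ hlen⟩

theorem len_mul_s_lt (hu : u ∈ D.W) (h : D.IsNonnegComb (-u (D.α i))) :
    D.len (u * D.s i) < D.len u := by
  obtain ⟨L, hlen, rfl⟩ := exists_reduced_word hu
  obtain ⟨L', hprod, hlt⟩ := exchange_condition h
  rw [← hprod, ← hlen]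
  exact (len_wordProd_le L').trans_lt hlt

theorem exists_len_mul_s_lt (hu : u ∈ D.W) (hne : u ≠ 1) : ∃ i, D.len (u * D.s i) < D.len u := by
  obtain ⟨L, hlen, rfl⟩ := exists_reduced_word hu
  rcases L.eq_nil_or_concat' with rfl | ⟨L, i, rfl⟩
  · exact absurd rfl hne
  · refine ⟨i, ?_⟩
    rw [← hlen, wordProd_concat, mul_assoc, s_mul_s, mul_one, List.length_append]
    exact Nat.lt_succ_of_le (len_wordProd_le L)

theorem eq_one_of_forall_isPos (hu : u ∈ D.W) (h : ∀ i, D.IsPos (u (D.α i))) : u = 1 := by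
  by_contra hne
  obtain ⟨i, hi⟩ := exists_len_mul_s_lt hu hne
  have hlt := len_mul_s_lt (i := i) (D.W.mul_mem hu (s_mem_W i)) <| by
    rw [LinearEquiv.mul_apply, s_α, map_neg, neg_neg]
    exact (h i).1
  rw [mul_assoc, s_mul_s, mul_one] at hlt
  exact hi.asymm hlt

end Length

section Orbit

theorem mem_orbit_iff : x ∈ MulAction.orbit D.W ω ↔ ∃ u ∈ D.W, u ω = x :=
  ⟨fun ⟨u, hu⟩ ↦ ⟨u, u.2, hu⟩, fun ⟨u, hu, hx⟩ ↦ ⟨⟨u, hu⟩, hx⟩⟩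

theorem s_mem_orbit (hx : x ∈ MulAction.orbit D.W ω) (i : Fin D.l) :
    D.s i x ∈ MulAction.orbit D.W ω :=
  MulAction.mem_orbit_of_mem_orbit (⟨D.s i, s_mem_W i⟩ : D.W) hx

-- `u ω` is determined by the images of the simple roots, which are roots.
theorem finite_orbit (D : RootSystemWithBase V) (ω : V) : (MulAction.orbit D.W ω).Finite := by
  have hroots : (Set.univ.pi fun _ : Fin D.l ↦ (D.Φ : Set V)).Finite :=
    Set.Finite.pi fun _ ↦ D.Φ.finite_toSet
  refine (hroots.image fun f ↦ ∑ i, D.coord i ω • f i).subset fun x hx ↦ ?_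
  obtain ⟨u, hu, rfl⟩ := mem_orbit_iff.1 hx
  refine ⟨fun i ↦ u (D.α i), fun i _ ↦ apply_mem_Φ hu (D.α_mem i), ?_⟩
  conv_rhs => rw [← D.sum_coord_smul ω]
  simp only [map_sum, map_smul]

end Orbit

section ParabolicCoset

theorem exists_mem_WI_apply_eq (hx : x ∈ MulAction.orbit D.W ω) : ∃ u ∈ D.WI ω, u ω = x := by
  obtain ⟨u, ⟨hu, hux⟩, hmin⟩ :=
    exists_minimalFor_of_wellFoundedLT (fun u ↦ u ∈ D.W ∧ u ω = x) D.len (mem_orbit_iff.1 hx)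
  refine ⟨u, ⟨hu, fun i hi ↦ ?_⟩, hux⟩
  refine (isPos_or_isPos_neg (apply_mem_Φ hu (D.α_mem i))).resolve_right fun hneg ↦ ?_
  have hfix : D.s i ω = ω := by rw [s_apply_eq, hi, zero_smul, sub_zero]
  have hlt := len_mul_s_lt hu hneg.1
  exact hlt.not_ge
    (hmin ⟨D.W.mul_mem hu (s_mem_W i), by rw [LinearEquiv.mul_apply, hfix, hux]⟩ hlt.le)

theorem IsDominant.inner_nonneg (hω : D.IsDominant ω) (hv : D.IsNonnegComb v) : 0 ≤ ⟪ω, v⟫ := by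
  rw [D.inner_eq_sum_coord_mul]
  exact Finset.sum_nonneg fun i _ ↦
    mul_nonneg (isNonnegComb_iff.1 hv i) (pairing_nonneg_iff.1 (hω i))

theorem isNonnegComb_apply_of_mem_WI (hω : D.IsDominant ω) (hu : u ∈ D.WI ω)
    (hv : D.IsNonnegComb v) (horth : ⟪ω, v⟫ = 0) : D.IsNonnegComb (u v) := by
  rw [isNonnegComb_iff] at hv ⊢
  have hterm : ∀ k, D.coord k v * ⟪ω, D.α k⟫ = 0 := by
    rw [D.inner_eq_sum_coord_mul, Finset.sum_eq_zero_iff_of_nonneg fun k _ ↦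
      mul_nonneg (hv k) (pairing_nonneg_iff.1 (hω k))] at horth
    exact fun k ↦ horth k (Finset.mem_univ k)
  intro j
  rw [← D.sum_coord_smul v, map_sum, map_sum]
  refine Finset.sum_nonneg fun k _ ↦ ?_
  rw [map_smul, map_smul, smul_eq_mul]
  rcases mul_eq_zero.1 (hterm k) with hk | hk
  · rw [hk, zero_mul]
  · have hpair : D.pairing ω (D.α k) = 0 := by rw [pairing, hk, mul_zero, zero_div]
    exact mul_nonneg (hv k) (isNonnegComb_iff.1 (hu.2 k hpair).1 j)

theorem eq_of_mem_WI_of_apply_eq (hω : D.IsDominant ω) {u u' : V ≃ₗ[ℝ] V} (hu : u ∈ D.WI ω)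
    (hu' : u' ∈ D.WI ω) (h : u ω = u' ω) : u = u' := by
  have hquot : u'⁻¹ * u ∈ D.W := D.W.mul_mem (D.W.inv_mem hu'.1) hu.1
  have apply_quot (v : V) : u' ((u'⁻¹ * u) v) = u v := by
    rw [← LinearEquiv.mul_apply, mul_inv_cancel_left]
  have hfix : (u'⁻¹ * u) ω = ω := u'.injective ((apply_quot ω).trans h)
  suffices u'⁻¹ * u = 1 from (inv_mul_eq_one.1 this).symm
  refine eq_one_of_forall_isPos hquot fun i ↦ ?_
  refine (isPos_or_isPos_neg (apply_mem_Φ hquot (D.α_mem i))).resolve_right fun hneg ↦ ?_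
  have hinner : ⟪ω, -(u'⁻¹ * u) (D.α i)⟫ = -⟪ω, D.α i⟫ := by
    rw [inner_neg_right, ← inner_apply_apply hquot ω (D.α i), hfix]
  have horth : ⟪ω, D.α i⟫ = 0 :=
    le_antisymm (by linarith [hω.inner_nonneg hneg.1]) (hω.inner_nonneg (isPos_α i).1)
  have hpos : D.IsPos (u (D.α i)) := hu.2 i (by rw [pairing, horth, mul_zero, zero_div])
  have hnonneg := isNonnegComb_apply_of_mem_WI hω hu' hneg.1 (by rw [hinner, horth, neg_zero])
  rw [map_neg, apply_quot] at hnonneg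
  exact hpos.not_isNonnegComb_neg hnonneg

theorem existsUnique_mem_WI_apply_eq (hω : D.IsDominant ω) (hx : x ∈ MulAction.orbit D.W ω) :
    ∃! u, u ∈ D.WI ω ∧ u ω = x := by
  obtain ⟨u, hu, hux⟩ := exists_mem_WI_apply_eq hx
  exact ⟨u, ⟨hu, hux⟩, fun u' ⟨hu', hux'⟩ ↦
    eq_of_mem_WI_of_apply_eq hω hu' hu (hux'.trans hux.symm)⟩

end ParabolicCoset

section PositivePart

theorem inner_nonpos_of_pairing_nonpos (hv : D.IsNonnegComb v)
    (h : ∀ k, 0 < D.coord k v → D.pairing x (D.α k) ≤ 0) : ⟪x, v⟫ ≤ 0 := by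
  rw [isNonnegComb_iff] at hv
  rw [D.inner_eq_sum_coord_mul]
  refine Finset.sum_nonpos fun k _ ↦ ?_
  rcases (hv k).eq_or_lt with hk | hk
  · rw [← hk, zero_mul]
  · exact mul_nonpos_of_nonneg_of_nonpos hk.le (pairing_nonpos_iff.1 (h k hk))

/-- The part of `v` with positive coefficients in its expansion in simple roots, so that
`v = coordPosPart v - coordPosPart (-v)`. -/
noncomputable def coordPosPart (D : RootSystemWithBase V) (v : V) : V :=
  ∑ i, (D.coord i v)⁺ • D.α i

@[simp]
theorem coord_coordPosPart (i : Fin D.l) (v : V) :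
    D.coord i (D.coordPosPart v) = (D.coord i v)⁺ :=
  coord_sum_smul _ i

theorem isNonnegComb_coordPosPart (v : V) : D.IsNonnegComb (D.coordPosPart v) :=
  ⟨_, fun _ ↦ posPart_nonneg _, rfl⟩

theorem coordPosPart_sub_coordPosPart_neg (D : RootSystemWithBase V) (v : V) :
    D.coordPosPart v - D.coordPosPart (-v) = v := D.ext_coord fun i ↦ by
  rw [map_sub, coord_coordPosPart, coord_coordPosPart, map_neg, posPart_neg, posPart_sub_negPart]

theorem coordPosPart_eq_zero_iff : D.coordPosPart v = 0 ↔ ∀ i, D.coord i v ≤ 0 := by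
  refine ⟨fun h i ↦ ?_, fun h ↦ D.ext_coord fun i ↦ ?_⟩
  · rw [← posPart_eq_zero, ← coord_coordPosPart, h, map_zero]
  · rw [coord_coordPosPart, map_zero, posPart_eq_zero.2 (h i)]

theorem inner_coordPosPart_neg_nonpos (D : RootSystemWithBase V) (v : V) :
    ⟪D.coordPosPart (-v), D.coordPosPart v⟫ ≤ 0 := by
  refine inner_nonpos_of_pairing_nonpos (isNonnegComb_coordPosPart v) fun j hj ↦ ?_
  rw [pairing_nonpos_iff, real_inner_comm]
  refine inner_nonpos_of_pairing_nonpos (isNonnegComb_coordPosPart (-v)) fun i hi ↦ ?_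
  refine pairing_α_nonpos ?_
  rintro rfl
  rw [coord_coordPosPart, posPart_pos_iff] at hi hj
  rw [map_neg] at hi
  linarith

theorem coord_nonpos_of_pairing_nonpos
    (h : ∀ k, 0 < D.coord k x → D.pairing x (D.α k) ≤ 0) (k : Fin D.l) : D.coord k x ≤ 0 := by
  set p := D.coordPosPart x
  set q := D.coordPosPart (-x)
  have hxp : ⟪x, p⟫ ≤ 0 :=
    inner_nonpos_of_pairing_nonpos (isNonnegComb_coordPosPart x) fun k hk ↦
      h k (by rwa [coord_coordPosPart, posPart_pos_iff] at hk)
  have hqp : ⟪q, p⟫ ≤ 0 := D.inner_coordPosPart_neg_nonpos x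
  have hpp : ⟪p, p⟫ ≤ 0 := by
    rw [← D.coordPosPart_sub_coordPosPart_neg x, inner_sub_left] at hxp
    linarith
  exact coordPosPart_eq_zero_iff.1 (real_inner_self_nonpos.1 hpp) k

theorem coord_nonneg_of_pairing_nonneg
    (h : ∀ k, D.coord k x < 0 → 0 ≤ D.pairing x (D.α k)) (k : Fin D.l) : 0 ≤ D.coord k x := by
  have := coord_nonpos_of_pairing_nonpos (x := -x) fun k hk ↦ by
    rw [map_neg, neg_pos] at hk
    rw [pairing_neg_left, neg_nonpos]
    exact h k hk
  simpa using this k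

end PositivePart

section RootLattice

/-- The root lattice: the integral combinations of the simple roots. -/
def rootLattice (D : RootSystemWithBase V) : Submodule ℤ V := Submodule.span ℤ (Set.range D.α)

theorem mem_rootLattice_iff : v ∈ D.rootLattice ↔ ∀ i, ∃ n : ℤ, (n : ℝ) = D.coord i v := by
  rw [rootLattice, ← coe_simpleBasis, Module.Basis.mem_span_iff_repr_mem]
  rfl

theorem coordPosPart_mem_rootLattice (hv : v ∈ D.rootLattice) :
    D.coordPosPart v ∈ D.rootLattice := by
  rw [mem_rootLattice_iff] at hv ⊢
  intro i
  obtain ⟨n, hn⟩ := hv i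
  exact ⟨n⁺, by rw [coord_coordPosPart, ← hn, posPart_def, posPart_def]; push_cast; rfl⟩

/-- The condition `⟨x, β∨⟩ ∈ {-1, 0, 1}` on all roots `β`: minusculity without dominance, which is
inherited by Weyl conjugates. -/
def IsSmall (D : RootSystemWithBase V) (x : V) : Prop :=
  ∀ β ∈ D.Φ, D.pairing x β = -1 ∨ D.pairing x β = 0 ∨ D.pairing x β = 1

namespace IsSmall

theorem apply (hx : D.IsSmall x) (hu : u ∈ D.W) : D.IsSmall (u x) := by
  intro β hβ
  have hβ' : u⁻¹ β ∈ D.Φ := apply_mem_Φ (D.W.inv_mem hu) hβ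
  have h := hx _ hβ'
  rwa [← pairing_apply_apply hu, ← LinearEquiv.mul_apply, mul_inv_cancel] at h

theorem s_eq_sub_α (hx : D.IsSmall x) (hi : 0 < D.pairing x (D.α i)) : D.s i x = x - D.α i := by
  have hone : D.pairing x (D.α i) = 1 := by
    rcases hx _ (D.α_mem i) with h | h | h <;> linarith
  rw [s_apply_eq, hone, one_smul]

theorem s_eq_add_α (hx : D.IsSmall x) (hi : D.pairing x (D.α i) < 0) : D.s i x = x + D.α i := by
  have hone : D.pairing x (D.α i) = -1 := by
    rcases hx _ (D.α_mem i) with h | h | h <;> linarith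
  rw [s_apply_eq, hone, neg_one_smul, sub_neg_eq_add]

theorem sub_mem_rootLattice (hω : D.IsSmall ω) (hx : x ∈ MulAction.orbit D.W ω) :
    x - ω ∈ D.rootLattice := by
  obtain ⟨u, hu, rfl⟩ := mem_orbit_iff.1 hx
  clear hx
  induction hu using W_induction with
  | one => simp
  | s_mul i u hu ih =>
    obtain ⟨c, hc⟩ : ∃ c : ℤ, (c : ℝ) = D.pairing (u ω) (D.α i) := by
      rcases hω.apply hu _ (D.α_mem i) with h | h | h
      exacts [⟨-1, by simp [h]⟩, ⟨0, by simp [h]⟩, ⟨1, by simp [h]⟩]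
    have hstep : (D.s i * u) ω - ω = u ω - ω - c • D.α i := by
      rw [LinearEquiv.mul_apply, s_apply_eq, ← hc, Int.cast_smul_eq_zsmul]
      abel
    rw [hstep]
    exact sub_mem ih (Submodule.smul_mem _ c (Submodule.subset_span ⟨i, rfl⟩))

theorem exists_s_add_sum_eq (hx : D.IsSmall x) {n : Fin D.l → ℤ} {k : Fin D.l}
    (hk : n k * D.pairing x (D.α k) < 0) :
    ∃ n' : Fin D.l → ℤ, D.s k x + ∑ j, (n' j : ℝ) • D.α j = x + ∑ j, (n j : ℝ) • D.α j ∧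
      ∑ j, (n' j).natAbs < ∑ j, (n j).natAbs := by
  obtain ⟨c, hc, hcn⟩ : ∃ c : ℤ, (c : ℝ) = D.pairing x (D.α k) ∧
      (n k + c).natAbs < (n k).natAbs := by
    rcases hx _ (D.α_mem k) with h | h | h <;> rw [h] at hk
    · have : 0 < n k := by exact_mod_cast (by linarith : (0 : ℝ) < n k)
      exact ⟨-1, by simp [h], by omega⟩
    · simp at hk
    · have : n k < 0 := by exact_mod_cast (by linarith : (n k : ℝ) < 0)
      exact ⟨1, by simp [h], by omega⟩
  refine ⟨n + Pi.single k c, ?_, Finset.sum_lt_sum (fun j _ ↦ ?_) ⟨k, Finset.mem_univ k, ?_⟩⟩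
  · have hsum : ∑ j, ((n + Pi.single k c : Fin D.l → ℤ) j : ℝ) • D.α j =
        ∑ j, (n j : ℝ) • D.α j + (c : ℝ) • D.α k := by
      simp [add_smul, Finset.sum_add_distrib, Pi.single_apply, ite_smul]
    rw [hsum, s_apply_eq, ← hc]
    abel
  · rcases eq_or_ne j k with rfl | hj
    · simpa using hcn.le
    · simp [hj]
  · simpa using hcn

theorem norm_le_norm_add_sum (hx : D.IsSmall x) (n : Fin D.l → ℤ) :
    ‖x‖ ≤ ‖x + ∑ j, (n j : ℝ) • D.α j‖ := by
  induction hN : ∑ j, (n j).natAbs using Nat.strong_induction_on generalizing x n with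
  | _ N ih =>
    subst hN
    by_cases hstep : ∃ k, n k * D.pairing x (D.α k) < 0
    · obtain ⟨k, hk⟩ := hstep
      obtain ⟨n', hsum, hlt⟩ := hx.exists_s_add_sum_eq hk
      rw [← hsum, ← norm_apply (s_mem_W k) x]
      exact ih _ hlt (hx.apply (s_mem_W k)) n' rfl
    · push Not at hstep
      set v := ∑ j, (n j : ℝ) • D.α j with hv
      have hinner : 0 ≤ ⟪x, v⟫ := by
        simp only [hv, inner_sum, real_inner_smul_right]
        refine Finset.sum_nonneg fun j _ ↦ ?_
        rw [inner_α_eq, ← mul_assoc]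
        exact mul_nonneg (hstep j) (half_pos (inner_self_α_pos j)).le
      refine le_of_sq_le_sq ?_ (norm_nonneg _)
      rw [norm_add_sq_real]
      nlinarith [sq_nonneg ‖v‖]

theorem norm_le_norm_add (hx : D.IsSmall x) (hv : v ∈ D.rootLattice) : ‖x‖ ≤ ‖x + v‖ := by
  choose n hn using mem_rootLattice_iff.1 hv
  rw [← D.sum_coord_smul v]
  simp only [← hn]
  exact hx.norm_le_norm_add_sum n

-- Otherwise the join of `y` and `z` would be shorter than `z`.
theorem vle_of_pairing_nonpos (hz : D.IsSmall z) (hyz : y - z ∈ D.rootLattice)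
    (h : ∀ k, D.coord k z < D.coord k y → D.pairing y (D.α k) ≤ 0) : D.vle y z := by
  set p := D.coordPosPart (y - z)
  set q := D.coordPosPart (-(y - z))
  have hjoin : z + p = y + q := by
    have : p - q = y - z := D.coordPosPart_sub_coordPosPart_neg (y - z)
    rw [← sub_eq_zero, ← sub_eq_zero.2 this]
    abel
  have hyp : ⟪y, p⟫ ≤ 0 :=
    inner_nonpos_of_pairing_nonpos (isNonnegComb_coordPosPart _) fun k hk ↦
      h k (by rwa [coord_coordPosPart, posPart_pos_iff, map_sub, sub_pos] at hk)
  have hqp : ⟪q, p⟫ ≤ 0 := D.inner_coordPosPart_neg_nonpos (y - z)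
  have hjp : ⟪z + p, p⟫ ≤ 0 := by
    rw [hjoin, inner_add_left]
    exact add_nonpos hyp hqp
  have hnorm : ‖z‖ ^ 2 ≤ ‖z + p‖ ^ 2 :=
    pow_le_pow_left₀ (norm_nonneg z) (hz.norm_le_norm_add (coordPosPart_mem_rootLattice hyz)) 2
  have hpp : ⟪p, p⟫ ≤ 0 := by
    rw [norm_add_sq_real, ← real_inner_self_eq_norm_sq p] at hnorm
    rw [inner_add_left] at hjp
    linarith
  have hp : p = 0 := real_inner_self_nonpos.1 hpp
  exact vle_iff.2 fun k ↦ by simpa using coordPosPart_eq_zero_iff.1 hp k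

theorem of_mem_orbit (hω : D.IsSmall ω) (hx : x ∈ MulAction.orbit D.W ω) : D.IsSmall x := by
  obtain ⟨u, hu, rfl⟩ := mem_orbit_iff.1 hx
  exact hω.apply hu

theorem sub_α_mem_orbit (hω : D.IsSmall ω) (hx : x ∈ MulAction.orbit D.W ω)
    (hi : 0 < D.pairing x (D.α i)) : x - D.α i ∈ MulAction.orbit D.W ω :=
  (hω.of_mem_orbit hx).s_eq_sub_α hi ▸ s_mem_orbit hx i

theorem add_α_mem_orbit (hω : D.IsSmall ω) (hx : x ∈ MulAction.orbit D.W ω)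
    (hi : D.pairing x (D.α i) < 0) : x + D.α i ∈ MulAction.orbit D.W ω :=
  (hω.of_mem_orbit hx).s_eq_add_α hi ▸ s_mem_orbit hx i

end IsSmall

end RootLattice

section FractionalPart

theorem IsMinuscule.isSmall (hω : D.IsMinuscule ω) : D.IsSmall ω := hω.2

theorem IsDominant.isNonnegComb (hω : D.IsDominant ω) : D.IsNonnegComb ω :=
  isNonnegComb_iff.2 <| coord_nonneg_of_pairing_nonneg fun k _ ↦ hω k

theorem exists_mem_orbit_coord_mem_Ico (hω : D.IsMinuscule ω) (i : Fin D.l) :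
    ∃ x ∈ MulAction.orbit D.W ω, D.coord i x ∈ Set.Ico 0 1 := by
  obtain ⟨x, ⟨hx, hxi⟩, hmin⟩ := Set.exists_min_image
    {x ∈ MulAction.orbit D.W ω | 0 ≤ D.coord i x} D.height
    ((D.finite_orbit ω).subset (Set.sep_subset _ _))
    ⟨ω, MulAction.mem_orbit_self ω, isNonnegComb_iff.1 hω.1.isNonnegComb i⟩
  refine ⟨x, hx, hxi, lt_of_not_ge fun hone ↦ ?_⟩
  have hantidominant : ∀ k, D.pairing x (D.α k) ≤ 0 := by
    refine fun k ↦ le_of_not_gt fun hk ↦ ?_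
    have hcoord : 0 ≤ D.coord i (x - D.α k) := by
      rw [map_sub, coord_α]
      split_ifs <;> linarith
    have hheight := hmin _ ⟨hω.isSmall.sub_α_mem_orbit hx hk, hcoord⟩
    rw [map_sub, height_α] at hheight
    linarith
  linarith [coord_nonpos_of_pairing_nonpos (fun k _ ↦ hantidominant k) i]

theorem exists_isNonnegComb_mem_orbit_coord_lt_one (hω : D.IsMinuscule ω) (i : Fin D.l) :
    ∃ x ∈ MulAction.orbit D.W ω, D.IsNonnegComb x ∧ D.coord i x < 1 := by
  obtain ⟨x, ⟨hx, hxi⟩, hmax⟩ := Set.exists_max_image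
    {x ∈ MulAction.orbit D.W ω | D.coord i x ∈ Set.Ico 0 1} D.height
    ((D.finite_orbit ω).subset (Set.sep_subset _ _)) (exists_mem_orbit_coord_mem_Ico hω i)
  refine ⟨x, hx, isNonnegComb_iff.2 (coord_nonneg_of_pairing_nonneg fun k hk ↦ ?_), hxi.2⟩
  refine le_of_not_gt fun hpair ↦ ?_
  have hki : k ≠ i := by
    rintro rfl
    exact hk.not_ge hxi.1
  have hcoord : D.coord i (x + D.α k) ∈ Set.Ico 0 1 := by
    rwa [map_add, coord_α, if_neg hki, add_zero]
  have hheight := hmax _ ⟨hω.isSmall.add_α_mem_orbit hx hpair, hcoord⟩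
  rw [map_add, height_α] at hheight
  linarith

theorem exists_vle_forall_isNonnegComb_mem_orbit (hω : D.IsMinuscule ω) :
    ∃ x ∈ MulAction.orbit D.W ω, D.IsNonnegComb x ∧
      ∀ z ∈ MulAction.orbit D.W ω, D.IsNonnegComb z → D.vle x z := by
  obtain ⟨x, ⟨hx, hx₀⟩, hmin⟩ := Set.exists_min_image
    {x ∈ MulAction.orbit D.W ω | D.IsNonnegComb x} D.height
    ((D.finite_orbit ω).subset (Set.sep_subset _ _))
    ⟨ω, MulAction.mem_orbit_self ω, hω.1.isNonnegComb⟩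
  refine ⟨x, hx, hx₀, fun z hz hz₀ ↦ ?_⟩
  rw [isNonnegComb_iff] at hx₀ hz₀
  have hxz : x - z ∈ D.rootLattice := by
    simpa using sub_mem (hω.isSmall.sub_mem_rootLattice hx) (hω.isSmall.sub_mem_rootLattice hz)
  refine (hω.isSmall.of_mem_orbit hz).vle_of_pairing_nonpos hxz fun k hk ↦ ?_
  refine le_of_not_gt fun hpair ↦ ?_
  have hone : 1 ≤ D.coord k x := by
    obtain ⟨n, hn⟩ := mem_rootLattice_iff.1 hxz k
    rw [map_sub] at hn
    have : (1 : ℝ) ≤ n := by exact_mod_cast (by exact_mod_cast hn ▸ sub_pos.2 hk : 0 < n)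
    linarith [hz₀ k]
  have hnonneg : D.IsNonnegComb (x - D.α k) := isNonnegComb_iff.2 fun j ↦ by
    rw [map_sub, coord_α]
    split_ifs with hkj
    · subst hkj
      linarith
    · linarith [hx₀ j]
  have hheight := hmin _ ⟨hω.isSmall.sub_α_mem_orbit hx hpair, hnonneg⟩
  rw [map_sub, height_α] at hheight
  linarith

theorem sum_fract_coord_smul_mem_orbit (hω : D.IsMinuscule ω) :
    ∑ i, Int.fract (D.coord i ω) • D.α i ∈ MulAction.orbit D.W ω := by
  obtain ⟨x, hx, hx₀, hleast⟩ := exists_vle_forall_isNonnegComb_mem_orbit hω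
  suffices ∀ i, Int.fract (D.coord i ω) = D.coord i x by
    simpa only [this, D.sum_coord_smul] using hx
  intro i
  have hlt : D.coord i x < 1 := by
    obtain ⟨z, hz, hz₀, hzi⟩ := exists_isNonnegComb_mem_orbit_coord_lt_one hω i
    exact (vle_iff.1 (hleast z hz hz₀) i).trans_lt hzi
  obtain ⟨n, hn⟩ := mem_rootLattice_iff.1 (hω.isSmall.sub_mem_rootLattice hx) i
  exact Int.fract_eq_iff.2 ⟨isNonnegComb_iff.1 hx₀ i, hlt, -n, by
    rw [Int.cast_neg, hn, map_sub, neg_sub]⟩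

end FractionalPart

end RootSystemWithBase

/-- Let `ω = ∑ m i • α i` be a minuscule weight with nonnegative
rational coefficients.  Then there is a unique `τ ∈ W^I` with
`τ(ω) = ∑ (m i − ⌊m i⌋) • α i`. -/
theorem stmt6 {V : Type*} [NormedAddCommGroup V] [InnerProductSpace ℝ V]
    (D : RootSystemWithBase V) (m : Fin D.l → ℚ) (hm : ∀ i, 0 ≤ m i)
    (ω : V) (hω : ω = ∑ i, (m i : ℝ) • D.α i) (hmin : D.IsMinuscule ω) :
    ∃! τ : V ≃ₗ[ℝ] V, τ ∈ D.WI ω ∧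
      τ ω = ∑ i, ((m i : ℝ) - ((⌊m i⌋ : ℤ) : ℝ)) • D.α i := by
  have hcoord (i) : D.coord i ω = m i := by rw [hω, RootSystemWithBase.coord_sum_smul]
  have hfract (i) : Int.fract (D.coord i ω) = m i - ((⌊m i⌋ : ℤ) : ℝ) := by
    rw [hcoord, ← Int.self_sub_floor, Rat.floor_cast]
  simp only [← hfract]
  exact RootSystemWithBase.existsUnique_mem_WI_apply_eq hmin.1
    (RootSystemWithBase.sum_fract_coord_smul_mem_orbit hmin)
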